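/- arXiv:1212.4793 — 3 statements merged into one kernel-verified Lean document; each statement's English description precedes it below -/
import Mathlib

section
/- Let X, Y be sets, L, M complete lattices, f : X → Y, and φ : M → L with φ(⊤) = ⊤. Suppose q : (X → L) → (Y → M) is a right adjoint of the preimage operator p = (f,φ)^←, i.e. p and q form a Galois connection: p(b) ≤ u ⟺ b ≤ q(u) for all b : Y → M and u : X → L. If i_Y is an interior map on M^Y, then the initial operator î defined by î = p ∘ i_Y ∘ q is an interior map on L^X. -/
/-- Interior maps on an ordered set with a top element; the fuzzy powerset `X → L` with its
pointwise order is the case of interest. Idempotence is not required. -/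
structure IsInteriorMap {α : Type*} [Preorder α] [OrderTop α] (i : α → α) : Prop where
  apply_le : ∀ a, i a ≤ a
  monotone : Monotone i
  map_top : i ⊤ = ⊤

/-- The preimage operator `(f,φ)^←` between fuzzy powersets, which changes both the base set
(along `f`) and the lattice of truth values (along `φ`). -/
def fuzzyPreimage {X Y L M : Type*} (f : X → Y) (φ : M → L) (b : Y → M) : X → L :=
  φ ∘ b ∘ f

theorem fuzzyPreimage_top {X Y L M : Type*} [Top L] [Top M] (f : X → Y) {φ : M → L}
    (hφ : φ ⊤ = ⊤) : fuzzyPreimage f φ ⊤ = ⊤ :=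
  funext fun _ => hφ

theorem initial_operator_is_interior_map_general {α β : Type*} [PartialOrder α] [OrderTop α]
    [Preorder β] [OrderTop β] {p : α → β} {q : β → α} (gc : GaloisConnection p q)
    (hp : p ⊤ = ⊤) {i : α → α} (hi : IsInteriorMap i) : IsInteriorMap (p ∘ i ∘ q) where
  apply_le u := gc.l_le (hi.apply_le (q u))
  monotone := gc.monotone_l.comp (hi.monotone.comp gc.monotone_u)
  map_top := calc
    p (i (q ⊤)) = p (i ⊤) := by rw [gc.u_top]
    _ = p ⊤ := by rw [hi.map_top]
    _ = ⊤ := hp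

/-- The initial operator `î = (f,φ)^← ∘ i_Y ∘ (f,φ)_*` is an interior map. -/
theorem initial_operator_is_interior_map
    {X Y L M : Type*} [CompleteLattice L] [CompleteLattice M]
    (f : X → Y) (φ : M → L) (hφ : φ ⊤ = ⊤)
    (q : (X → L) → (Y → M))
    (hgc : ∀ (b : Y → M) (u : X → L), φ ∘ b ∘ f ≤ u ↔ b ≤ q u)
    (iY : (Y → M) → (Y → M))
    (hY1 : ∀ v, iY v ≤ v) (hY2 : ∀ v w, v ≤ w → iY v ≤ iY w) (hY3 : iY ⊤ = ⊤) :
    (∀ u : X → L, φ ∘ iY (q u) ∘ f ≤ u) ∧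
    (∀ u u' : X → L, u ≤ u' → φ ∘ iY (q u) ∘ f ≤ φ ∘ iY (q u') ∘ f) ∧
    (φ ∘ iY (q (⊤ : X → L)) ∘ f = ⊤) := by
  have hInt : IsInteriorMap (fuzzyPreimage f φ ∘ iY ∘ q) :=
    initial_operator_is_interior_map_general hgc (fuzzyPreimage_top f hφ) ⟨hY1, hY2, hY3⟩
  exact ⟨hInt.apply_le, hInt.monotone, hInt.map_top⟩
end

section
/- Let X, Y be sets, L, M complete lattices, f : X → Y, and φ : M → L. Suppose q : (X → L) → (Y → M) is a right adjoint of the preimage operator p = (f,φ)^← (Galois connection: p(b) ≤ u ⟺ b ≤ q(u)). Let i_Y be an interior map on M^Y and let î = p ∘ i_Y ∘ q be the initial operator on L^X. Then (f,φ) is fuzzy I-continuous from (X,L,î) to (Y,M,i_Y): for every v : Y → M, (f,φ)^←(i_Y v) ≤ î((f,φ)^← v). -/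
section Operators

variable {α β : Type*}

/-- I-continuity of a morphism from `(α, j)` to `(β, i)`. The morphism is encoded by its preimage
operator `p`, so that arbitrary preorders can stand in for the fuzzy powersets. -/
def IsIContinuous [Preorder α] (p : β → α) (j : α → α) (i : β → β) : Prop :=
  ∀ b, p (i b) ≤ j (p b)

/-- The initial operator `î` on `α` induced by an operator `i` on `β`, along a preimage operator `p`
and its intended right adjoint `q`. -/
def initialOperator (p : β → α) (q : α → β) (i : β → β) : α → α :=
  p ∘ i ∘ q

theorem initial_operator_continuous_general [Preorder α] [Preorder β]
    {p : β → α} {q : α → β} {i : β → β} (gc : GaloisConnection p q) (hi : Monotone i) :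
    IsIContinuous p (initialOperator p q i) i := by
  intro b
  have unit : b ≤ q (p b) := gc.le_u_l b
  exact gc.monotone_l (hi unit)

end Operators

/-- With the initial operator `î = (f,φ)^← ∘ i_Y ∘ (f,φ)_*` on `L^X`, the morphism
`(f,φ)` is fuzzy I-continuous. -/
theorem initial_operator_continuous
    {X Y L M : Type*} [CompleteLattice L] [CompleteLattice M]
    (f : X → Y) (φ : M → L)
    (q : (X → L) → (Y → M))
    (hgc : ∀ (b : Y → M) (u : X → L), φ ∘ b ∘ f ≤ u ↔ b ≤ q u)
    (iY : (Y → M) → (Y → M))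
    (hY1 : ∀ v, iY v ≤ v) (hY2 : ∀ v w, v ≤ w → iY v ≤ iY w) (hY3 : iY ⊤ = ⊤) :
    ∀ v : Y → M, φ ∘ iY v ∘ f ≤ φ ∘ iY (q (φ ∘ v ∘ f)) ∘ f := by
  have gc : GaloisConnection (fuzzyPreimage f φ) q := hgc
  exact initial_operator_continuous_general gc fun v w hvw => hY2 v w hvw
end

section
/- Let X, Y be sets, L, M complete lattices, f : X → Y, and φ : M → L. Suppose q : (X → L) → (Y → M) is a right adjoint of the preimage operator p = (f,φ)^← (Galois connection: p(b) ≤ u ⟺ b ≤ q(u)). Let i_Y be an interior map on M^Y which is idempotent, i.e. i_Y(i_Y(v)) = i_Y(v) for all v : Y → M. Then the initial operator î = p ∘ i_Y ∘ q is idempotent: î(î(u)) = î(u) for all u : X → L. -/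
theorem initial_operator_idempotent_general
    {α β : Type*} [PartialOrder α] [Preorder β] {p : β → α} {q : α → β}
    (gc : GaloisConnection p q) {i : β → β} (i_le : ∀ b, i b ≤ b) (i_mono : Monotone i)
    (i_le_i_i : ∀ b, i b ≤ i (i b)) (a : α) :
    p (i (q (p (i (q a))))) = p (i (q a)) := by
  apply le_antisymm
  · exact gc.l_le (i_le _)
  · calc
      p (i (q a)) ≤ p (i (i (q a))) := gc.monotone_l (i_le_i_i (q a))
      _ ≤ p (i (q (p (i (q a))))) := gc.monotone_l (i_mono (gc.le_u_l (i (q a))))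

/-- If `i_Y` is an idempotent interior map, then the initial operator
`î = p ∘ i_Y ∘ q` is idempotent. -/
theorem initial_operator_idempotent
    {X Y L M : Type*} [CompleteLattice L] [CompleteLattice M]
    (f : X → Y) (φ : M → L)
    (q : (X → L) → (Y → M))
    (hgc : ∀ (b : Y → M) (u : X → L), φ ∘ b ∘ f ≤ u ↔ b ≤ q u)
    (iY : (Y → M) → (Y → M))
    (hY1 : ∀ v, iY v ≤ v) (hY2 : ∀ v w, v ≤ w → iY v ≤ iY w) (hY3 : iY ⊤ = ⊤)
    (hidem : ∀ v, iY (iY v) = iY v) :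
    ∀ u : X → L,
      φ ∘ iY (q (φ ∘ iY (q u) ∘ f)) ∘ f = φ ∘ iY (q u) ∘ f :=
  initial_operator_idempotent_general (p := fun b => φ ∘ b ∘ f)
    hgc hY1 hY2 fun v => (hidem v).ge
end
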